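/- Let p be an odd prime and w ∈ V_5 be such that no nonzero binary quadratic form over 𝔽_p is apolar to w (i.e., w has catalecticant rank 3). Then S(w) = −p²·Σ χ(Disc(f)), where the sum runs over all classes [f] ∈ P(V_2^*) such that f² is apolar to w. -/

import Mathlib

open Finset

/-- Multiplication of binary forms encoded by coefficient tuples: a binary form
`∑ i, f i • x^(a-i) * y^i` of degree `a` is encoded as the tuple `f : Fin (a+1) → k`,
and multiplication of forms is convolution of coefficient tuples. -/
def formMul {k : Type*} [CommRing k] {a b : ℕ} (f : Fin (a + 1) → k)
    (g : Fin (b + 1) → k) : Fin (a + b + 1) → k :=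
  fun i => ∑ q : Fin (a + 1) × Fin (b + 1),
    if (q.1 : ℕ) + (q.2 : ℕ) = (i : ℕ) then f q.1 * g q.2 else 0

/-- The pairing `(w, v) = ∑ i, w i * v i` between `V_n` and `V_n^*`. -/
def pair {k : Type*} [CommRing k] {n : ℕ} (w v : Fin (n + 1) → k) : k :=
  ∑ i, w i * v i

/-- A binary quintic form is singular if it is nonzero and, over an algebraic closure,
it is divisible by the square of a nonzero linear form. -/
def IsSingularQuintic {k : Type*} [Field k] (v : Fin 6 → k) : Prop :=
  v ≠ 0 ∧ ∃ (l : Fin 2 → AlgebraicClosure k) (c : Fin 4 → AlgebraicClosure k),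
    l ≠ 0 ∧
    (fun i => algebraMap k (AlgebraicClosure k) (v i)) = formMul (formMul l l) c

open scoped Classical in
/-- The exponential sum `S(w)` over binary quintic forms that are zero or singular. -/
noncomputable def expSum (p : ℕ) [Fact p.Prime] (w : Fin 6 → ZMod p) : ℂ :=
  ∑ v : Fin 6 → ZMod p,
    if v = 0 ∨ IsSingularQuintic v then
      Complex.exp (2 * Real.pi * Complex.I * ((pair w v).val : ℂ) / (p : ℂ))
    else 0

/-- The discriminant of a binary quadratic form `f₀x² + f₁xy + f₂y²`. -/
def disc {k : Type*} [CommRing k] (f : Fin 3 → k) : k := f 1 ^ 2 - 4 * f 0 * f 2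

open Polynomial in
/-- The dehomogenization `∑ i, v i * X ^ i` of a binary form. -/
noncomputable def formPoly {k : Type*} [CommRing k] {n : ℕ} (v : Fin (n + 1) → k) : k[X] :=
  ∑ i : Fin (n + 1), monomial (i : ℕ) (v i)

section FormPoly

open Polynomial

variable {k : Type*}

theorem formPoly_coeff [CommRing k] {n : ℕ} (v : Fin (n + 1) → k) (i : Fin (n + 1)) :
    (formPoly v).coeff i = v i := by
  simp [formPoly, finsetSum_coeff, coeff_monomial, Fin.val_inj]

theorem formPoly_natDegree_le [CommRing k] {n : ℕ} (v : Fin (n + 1) → k) :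
    (formPoly v).natDegree ≤ n :=
  natDegree_sum_le_of_forall_le _ _ fun i _ =>
    (natDegree_monomial_le _).trans (Nat.lt_succ_iff.mp i.2)

theorem formPoly_injective [CommRing k] {n : ℕ} :
    Function.Injective (formPoly (k := k) (n := n)) := fun v w h => by
  funext i
  rw [← formPoly_coeff v, h, formPoly_coeff]

theorem formPoly_zero [CommRing k] {n : ℕ} : formPoly (0 : Fin (n + 1) → k) = 0 := by
  simp [formPoly]

theorem formPoly_ne_zero [CommRing k] {n : ℕ} {v : Fin (n + 1) → k} (hv : v ≠ 0) :
    formPoly v ≠ 0 := fun h => hv (formPoly_injective (h.trans formPoly_zero.symm))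

theorem formPoly_coeffs [CommRing k] {n : ℕ} {P : k[X]} (hP : P.natDegree ≤ n) :
    formPoly (fun i : Fin (n + 1) => P.coeff i) = P := by
  rw [formPoly, Fin.sum_univ_eq_sum_range (fun i => monomial i (P.coeff i)) (n + 1)]
  exact (P.as_sum_range' _ (Nat.lt_succ_of_le hP)).symm

theorem formPoly_map [CommRing k] {K : Type*} [CommRing K] (φ : k →+* K) {n : ℕ}
    (v : Fin (n + 1) → k) : formPoly (fun i => φ (v i)) = (formPoly v).map φ := by
  simp [formPoly, Polynomial.map_sum]

theorem formPoly_formMul [CommRing k] {a b : ℕ} (f : Fin (a + 1) → k) (g : Fin (b + 1) → k) :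
    formPoly (formMul f g) = formPoly f * formPoly g := by
  simp only [formPoly, formMul, map_sum, Finset.sum_mul_sum, monomial_mul_monomial]
  rw [Finset.sum_comm, Fintype.sum_prod_type]
  refine Finset.sum_congr rfl fun i _ => Finset.sum_congr rfl fun j _ => ?_
  rw [Finset.sum_eq_single (⟨i + j, by omega⟩ : Fin (a + b + 1))]
  · simp
  · intro m _ hm
    rw [if_neg fun h => hm (Fin.ext h.symm), map_zero]
  · simp

theorem formMul_injective [CommRing k] [IsDomain k] {a b : ℕ} {f : Fin (a + 1) → k}
    (hf : f ≠ 0) : Function.Injective (formMul f : (Fin (b + 1) → k) → _) := fun g h hgh => by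
  have := congrArg formPoly hgh
  rw [formPoly_formMul, formPoly_formMul] at this
  exact formPoly_injective (mul_left_cancel₀ (formPoly_ne_zero hf) this)

theorem formMul_ne_zero [CommRing k] [IsDomain k] {a b : ℕ} {f : Fin (a + 1) → k}
    {g : Fin (b + 1) → k} (hf : f ≠ 0) (hg : g ≠ 0) : formMul f g ≠ 0 := fun h => by
  have := congrArg formPoly h
  rw [formPoly_formMul, formPoly_zero] at this
  exact mul_ne_zero (formPoly_ne_zero hf) (formPoly_ne_zero hg) this

/-- Divisibility of binary forms in terms of their dehomogenizations. -/
theorem mem_range_formMul_iff [CommRing k] {a b : ℕ} (f : Fin (a + 1) → k)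
    (v : Fin (a + b + 1) → k) :
    v ∈ Set.range (formMul f : (Fin (b + 1) → k) → _) ↔
      ∃ H : k[X], H.natDegree ≤ b ∧ formPoly v = formPoly f * H := by
  constructor
  · rintro ⟨h, rfl⟩
    exact ⟨formPoly h, formPoly_natDegree_le h, formPoly_formMul f h⟩
  · rintro ⟨H, hH, hv⟩
    exact ⟨_, formPoly_injective (by rw [formPoly_formMul, formPoly_coeffs hH, hv])⟩

/-- If the dehomogenization of `f` is monic of degree `m`, then `f` divides `v` as a form iff this
holds for the dehomogenizations and the degree leaves room for the cofactor. -/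
theorem mem_range_formMul_iff_of_monic [CommRing k] {a b m : ℕ} {f : Fin (a + 1) → k}
    (hf : (formPoly f).Monic) (hm : (formPoly f).natDegree = m) (v : Fin (a + b + 1) → k) :
    v ∈ Set.range (formMul f : (Fin (b + 1) → k) → _) ↔
      formPoly f ∣ formPoly v ∧ (formPoly v).natDegree ≤ m + b := by
  rw [mem_range_formMul_iff]
  constructor
  · rintro ⟨H, hH, hv⟩
    exact ⟨⟨H, hv⟩, hv ▸ natDegree_mul_le_of_le hm.le hH⟩
  · rintro ⟨⟨H, hv⟩, hd⟩
    refine ⟨H, ?_, hv⟩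
    rcases eq_or_ne H 0 with rfl | hH
    · simp
    · rw [hv, hf.natDegree_mul' hH, hm] at hd
      omega

theorem formPoly_linear [CommRing k] (a b : k) : formPoly ![a, b] = C a + C b * X := by
  simp [formPoly, Fin.sum_univ_two, C_mul_X_eq_monomial]

theorem formPoly_quadratic [CommRing k] (a b c : k) :
    formPoly ![a, b, c] = C a + C b * X + C c * X ^ 2 := by
  simp [formPoly, Fin.sum_univ_three, C_mul_X_eq_monomial, C_mul_X_pow_eq_monomial]

theorem Polynomial.exists_sq_dvd_iff_dvd [Field k] {P : k[X]} (hP : P ≠ 0) :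
    ∃ d s : k[X], d.Monic ∧ P = d ^ 2 * s ∧ ∀ g : k[X], g ^ 2 ∣ P ↔ g ∣ d := by
  classical
  let T : Set ℕ := {n | ∃ d : k[X], d.Monic ∧ d ^ 2 ∣ P ∧ d.natDegree = n}
  have hbdd : ∀ n ∈ T, n ≤ P.natDegree := by
    rintro n ⟨d, _, hd, rfl⟩
    have := natDegree_le_of_dvd hd hP
    rw [natDegree_pow] at this
    omega
  have hne : T.Nonempty := ⟨0, 1, monic_one, by simp, by simp⟩
  obtain ⟨d, hd, ⟨s, hs⟩, hdeg⟩ := Nat.sSup_mem hne ⟨_, hbdd⟩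
  have hmax : ∀ e : k[X], e.Monic → e ^ 2 ∣ P → e.natDegree ≤ d.natDegree := fun e he heP =>
    hdeg ▸ le_csSup ⟨_, hbdd⟩ ⟨e, he, heP, rfl⟩
  refine ⟨d, s, hd, hs, fun g => ⟨fun hg => ?_, fun h => (pow_dvd_pow_of_dvd h 2).trans ⟨s, hs⟩⟩⟩
  have hd0 := hd.ne_zero
  let _ := UniqueFactorizationMonoid.toGCDMonoid k[X]
  obtain ⟨g', d', hg', hd', hu⟩ := extract_gcd g d
  have hcop : IsCoprime g' d' := (gcd_isUnit_iff _ _).1 hu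
  have he0 : GCDMonoid.gcd g d ≠ 0 := fun h => hd0 (by rw [hd', h, zero_mul])
  have hg'0 : g' ≠ 0 := by
    rintro rfl
    rw [mul_zero] at hg'
    exact hP (by simpa [hg'] using hg)
  have h1 : g' ^ 2 ∣ s := by
    refine (hcop.pow (m := 2) (n := 2)).dvd_of_dvd_mul_left ?_
    refine (mul_dvd_mul_iff_left (pow_ne_zero 2 he0)).1 ?_
    rwa [← mul_assoc, ← mul_pow, ← mul_pow, ← hg', ← hd', ← hs]
  have hmon : (d * (g' * C g'.leadingCoeff⁻¹)).Monic :=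
    hd.mul (monic_mul_leadingCoeff_inv hg'0)
  have hunit : IsUnit (C g'.leadingCoeff⁻¹) :=
    isUnit_C.2 (isUnit_iff_ne_zero.2 (inv_ne_zero (leadingCoeff_ne_zero.2 hg'0)))
  have h2 := hmax _ hmon (by
    rw [mul_pow, hs, mul_pow]
    exact mul_dvd_mul_left _ ((hunit.pow 2).mul_right_dvd.2 h1))
  rw [hd.natDegree_mul (monic_mul_leadingCoeff_inv hg'0), natDegree_mul_leadingCoeff_inv _ hg'0]
    at h2
  have h3 : IsUnit g' := by
    rw [Polynomial.isUnit_iff_degree_eq_zero, degree_eq_natDegree hg'0]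
    simp only [Nat.cast_eq_zero]
    omega
  rw [hg', h3.mul_right_dvd]
  exact gcd_dvd_right g d

end FormPoly

section SquareDivisors

open Polynomial

open scoped Classical in
/-- The number of roots of a monic quadratic over a finite field of odd characteristic. -/
theorem card_filter_quadratic_eq_zero {k : Type*} [Field k] [Fintype k] [DecidableEq k] (hk : ringChar k ≠ 2)
    (c b : k) :
    (#{t : k | c + b * t + t ^ 2 = 0} : ℤ) = quadraticChar k (b ^ 2 - 4 * c) + 1 := by
  have h2 : (2 : k) ≠ 0 := Ring.two_ne_zero hk
  rw [← quadraticChar_card_sqrts hk, Nat.cast_inj]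
  refine Finset.card_bij (fun t _ => 2 * t + b) ?_ ?_ ?_
  · intro t ht
    simp only [mem_filter, mem_univ, true_and] at ht
    simp only [Set.mem_toFinset, Set.mem_ofPred_eq]
    linear_combination 4 * ht
  · intro t _ u _ h
    exact mul_left_cancel₀ h2 (add_right_cancel h)
  · intro u hu
    simp only [Set.mem_toFinset, Set.mem_ofPred_eq] at hu
    refine ⟨(u - b) / 2, ?_, by field_simp; ring⟩
    simp only [mem_filter, mem_univ, true_and]
    field_simp
    linear_combination hu

theorem sum_quadraticChar_disc {k : Type*} [Field k] [Fintype k] [DecidableEq k]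
    (hk : ringChar k ≠ 2) :
    ∑ q : k × k, quadraticChar k (q.2 ^ 2 - 4 * q.1) = 0 := by
  have h4 : (4 : k) ≠ 0 := by
    rw [show (4 : k) = 2 * 2 by norm_num]
    exact mul_ne_zero (Ring.two_ne_zero hk) (Ring.two_ne_zero hk)
  rw [Fintype.sum_prod_type_right]
  refine Finset.sum_eq_zero fun b _ => ?_
  rw [← quadraticChar_sum_zero hk]
  exact Fintype.sum_equiv ((Equiv.mulLeft₀ 4 h4).trans (Equiv.subLeft (b ^ 2))) _ _ fun c => rfl

theorem monic_quadratic {k : Type*} [Field k] (c b : k) :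
    (C c + C b * X + X ^ 2 : k[X]).Monic ∧ (C c + C b * X + X ^ 2 : k[X]).natDegree = 2 := by
  have : (C c + C b * X + X ^ 2 : k[X]) = C 1 * X ^ 2 + C b * X + C c := by rw [C_1]; ring
  rw [this]
  exact ⟨leadingCoeff_quadratic one_ne_zero, natDegree_quadratic one_ne_zero⟩

open scoped Classical in
/-- The indicator of polynomials of degree at most `5` with a square factor as a signed count of
their square divisors, i.e. Möbius inversion over the monic divisors of degree at most `2`. -/
theorem indicator_not_squarefree {k : Type*} [Field k] [Fintype k] [DecidableEq k] (hk : ringChar k ≠ 2)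
    {P : k[X]} (hP : P ≠ 0) (hdeg : P.natDegree ≤ 5) :
    (if Squarefree P then 0 else 1 : ℤ) =
      ∑ t : k, (if (X - C t) ^ 2 ∣ P then 1 else 0) -
      ∑ q : k × k, (if (C q.1 + C q.2 * X + X ^ 2) ^ 2 ∣ P then
        quadraticChar k (q.2 ^ 2 - 4 * q.1) else 0) := by
  obtain ⟨d, s, hd, hs, h⟩ := Polynomial.exists_sq_dvd_iff_dvd hP
  have hsf : Squarefree P ↔ d.natDegree = 0 := by
    constructor
    · intro hsq
      rw [← hd.isUnit_iff.trans hd.natDegree_eq_zero.symm]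
      exact hsq d ⟨s, by rw [hs, sq]⟩
    · intro h0 e he
      rw [hd.natDegree_eq_zero] at h0
      rw [← sq, h, h0] at he
      exact isUnit_of_dvd_one he
  have hd2 : d.natDegree ≤ 2 := by
    have := natDegree_le_of_dvd ⟨s, hs⟩ hP
    rw [natDegree_pow] at this
    omega
  simp only [h, hsf]
  have hquad : ∀ q : k × k, C q.1 + C q.2 * X + X ^ 2 ∣ d ↔ C q.1 + C q.2 * X + X ^ 2 = d := by
    refine fun q => ⟨fun hq => ?_, fun hq => hq.dvd⟩
    obtain ⟨hm, hq2⟩ := monic_quadratic q.1 q.2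
    exact (eq_of_monic_of_dvd_of_natDegree_le hm hd hq (by omega)).symm
  simp only [hquad]
  by_cases hd' : d.natDegree = 2
  · obtain ⟨c, b, rfl⟩ : ∃ c b, d = C c + C b * X + X ^ 2 := by
      refine ⟨d.coeff 0, d.coeff 1, ?_⟩
      conv_lhs => rw [d.as_sum_range_C_mul_X_pow, hd', Finset.sum_range_succ, Finset.sum_range_succ,
        Finset.sum_range_one, ← hd', hd.coeff_natDegree]
      simp [hd']
    have hinj : ∀ q : k × k, C q.1 + C q.2 * X + X ^ 2 = C c + C b * X + X ^ 2 ↔ q = (c, b) := by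
      refine fun q => ⟨fun hq => ?_, fun hq => by rw [hq]⟩
      have h0 := congrArg (coeff · 0) hq
      have h1 := congrArg (coeff · 1) hq
      simp [coeff_X_pow, coeff_C] at h0 h1
      exact Prod.ext h0 h1
    simp only [hinj, hd', dvd_iff_isRoot, IsRoot.def, eval_add, eval_mul, eval_C, eval_X, eval_pow,
      Finset.sum_boole, Finset.sum_ite_eq', Finset.mem_univ, if_true]
    rw [card_filter_quadratic_eq_zero hk c b]
    norm_num
  · have hzero : ∀ q : k × k, C q.1 + C q.2 * X + X ^ 2 ≠ d := by
      rintro q rfl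
      exact hd' (monic_quadratic q.1 q.2).2
    simp only [hzero, if_false, Finset.sum_const_zero, sub_zero]
    by_cases hd0 : d.natDegree = 0
    · rw [if_pos hd0]
      refine (Finset.sum_eq_zero fun t _ => if_neg fun ht => ?_).symm
      rw [hd.natDegree_eq_zero.1 hd0] at ht
      exact not_isUnit_X_sub_C t (isUnit_of_dvd_one ht)
    · rw [if_neg hd0]
      have hd1 : d.natDegree = 1 := by omega
      have hlin : ∀ t : k, X - C t ∣ d ↔ t = -d.coeff 0 := by
        intro t
        conv_lhs => rw [hd.eq_X_add_C hd1, dvd_iff_isRoot]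
        simp [add_eq_zero_iff_eq_neg]
      simp only [hlin, Finset.sum_ite_eq', Finset.mem_univ, if_true]

end SquareDivisors

section Singular

open Polynomial

/-- The square of the form `f` divides the form `v`, with a cofactor of degree `b`. -/
def SqDvd {k : Type*} [CommRing k] {a : ℕ} (b : ℕ) (f : Fin (a + 1) → k)
    (v : Fin (a + a + b + 1) → k) : Prop :=
  v ∈ Set.range (formMul (formMul f f) : (Fin (b + 1) → k) → _)

theorem sqDvd_zero {k : Type*} [CommRing k] {a b : ℕ} (f : Fin (a + 1) → k) :
    SqDvd b f 0 := by
  refine ⟨0, formPoly_injective ?_⟩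
  rw [formPoly_formMul, formPoly_zero, formPoly_zero, mul_zero]

theorem sqDvd_iff {k : Type*} [CommRing k] {a b m : ℕ} {f : Fin (a + 1) → k}
    (hf : (formPoly f).Monic) (hm : (formPoly f).natDegree = m) (v : Fin (a + a + b + 1) → k) :
    SqDvd b f v ↔ formPoly f ^ 2 ∣ formPoly v ∧ (formPoly v).natDegree ≤ 2 * m + b := by
  have h : formPoly (formMul f f) = formPoly f ^ 2 := by rw [formPoly_formMul, sq]
  rw [SqDvd, mem_range_formMul_iff_of_monic (m := 2 * m), h]
  · exact h ▸ hf.pow 2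
  · rw [h, hf.natDegree_pow, hm]

section Quintic

variable {k : Type*} [Field k] (v : Fin 6 → k)

theorem sqDvd_infinity : SqDvd 3 ![1, 0] v ↔ (formPoly (n := 5) v).natDegree ≤ 3 := by
  have h : formPoly ![(1 : k), 0] = 1 := by simp [formPoly_linear]
  refine (sqDvd_iff (a := 1) (b := 3) (m := 0) (h ▸ monic_one) (by rw [h, natDegree_one]) v).trans ?_
  simp [h]

theorem sqDvd_linear (t : k) : SqDvd 3 ![-t, 1] v ↔ (X - C t) ^ 2 ∣ formPoly (n := 5) v := by
  have h : formPoly ![-t, 1] = X - C t := by simp [formPoly_linear]; ring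
  refine (sqDvd_iff (a := 1) (b := 3) (m := 1) (h ▸ monic_X_sub_C t) (by rw [h, natDegree_X_sub_C])
    v).trans ?_
  rw [h]
  exact and_iff_left (formPoly_natDegree_le _)

theorem sqDvd_linear_infinity (t : k) : SqDvd 1 ![-t, 1, 0] v ↔
    (X - C t) ^ 2 ∣ formPoly (n := 5) v ∧ (formPoly (n := 5) v).natDegree ≤ 3 := by
  have h : formPoly ![-t, 1, 0] = X - C t := by simp [formPoly_quadratic]; ring
  refine (sqDvd_iff (a := 2) (b := 1) (m := 1) (h ▸ monic_X_sub_C t) (by rw [h, natDegree_X_sub_C])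
    v).trans ?_
  rw [h]

theorem sqDvd_quadratic (c b : k) : SqDvd 1 ![c, b, 1] v ↔
    (C c + C b * X + X ^ 2) ^ 2 ∣ formPoly (n := 5) v := by
  have h : formPoly ![c, b, 1] = C c + C b * X + X ^ 2 := by simp [formPoly_quadratic]
  obtain ⟨h1, h2⟩ := monic_quadratic c b
  refine (sqDvd_iff (a := 2) (b := 1) (m := 2) (h ▸ h1) (by rw [h, h2]) v).trans ?_
  rw [h]
  exact and_iff_left (formPoly_natDegree_le _)

variable {v}

theorem isSingularQuintic_iff [PerfectField k] (hv : v ≠ 0) :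
    IsSingularQuintic v ↔
      (formPoly (n := 5) v).natDegree ≤ 3 ∨ ¬ Squarefree (formPoly (n := 5) v) := by
  set P := formPoly (n := 5) v with hP
  set φ := algebraMap k (AlgebraicClosure k)
  have hmap : formPoly (n := 5) (fun i => φ (v i)) = P.map φ := formPoly_map (n := 5) φ v
  constructor
  · rintro ⟨-, l, c, hl, hlc⟩
    have hfac : P.map φ = formPoly l * formPoly l * formPoly c := by
      rw [← hmap, hlc]
      exact (formPoly_formMul (formMul l l) c).trans (by rw [formPoly_formMul])
    have hl' : formPoly l = C (l 0) + C (l 1) * X := by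
      rw [← formPoly_linear]
      congr 1
      ext i
      fin_cases i <;> rfl
    by_cases h1 : l 1 = 0
    · left
      rw [← natDegree_map φ, hfac, hl', h1, C_0, zero_mul, add_zero, ← C_mul]
      exact (natDegree_C_mul_le _ _).trans (formPoly_natDegree_le (n := 3) c)
    · right
      intro hsq
      have hu := (PerfectField.separable_iff_squarefree.2 hsq).map (f := φ) |>.squarefree
        (formPoly l) ⟨_, hfac⟩
      have := natDegree_eq_zero_of_isUnit hu
      rw [hl', add_comm, natDegree_linear h1] at this
      exact one_ne_zero this
  · have hsing : ∀ (l : Fin 2 → AlgebraicClosure k) (H : (AlgebraicClosure k)[X]),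
        l ≠ 0 → H.natDegree ≤ 3 → P.map φ = formPoly l ^ 2 * H → IsSingularQuintic v := by
      intro l H hl hH hfac
      refine ⟨hv, l, fun i => H.coeff i, hl, formPoly_injective (n := 5) ?_⟩
      rw [hmap, hfac]
      refine ((formPoly_formMul (formMul l l) _).trans ?_).symm
      rw [formPoly_formMul, formPoly_coeffs hH, sq]
    rintro (h | h)
    · refine hsing ![1, 0] (P.map φ) (fun h => one_ne_zero (congrFun h 0)) ?_ ?_
      · rwa [natDegree_map]
      · simp [formPoly_linear]
    · simp only [Squarefree, not_forall] at h
      obtain ⟨e, he, hu⟩ := h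
      have hP0 : P ≠ 0 := formPoly_ne_zero (n := 5) hv
      have he0 : e ≠ 0 := by
        rintro rfl
        exact hP0 (by simpa using he)
      obtain ⟨α, hα⟩ := IsAlgClosed.exists_root (e.map φ) (by
        rw [degree_map]
        exact fun h => hu (isUnit_iff_degree_eq_zero.2 h))
      have hdvd : (X - C α) ^ 2 ∣ P.map φ := by
        refine (pow_dvd_pow_of_dvd (dvd_iff_isRoot.2 hα) 2).trans ?_
        rw [← Polynomial.map_pow, sq]
        exact Polynomial.map_dvd φ he
      obtain ⟨H, hH⟩ := hdvd
      have hH0 : H ≠ 0 := by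
        rintro rfl
        rw [mul_zero, Polynomial.map_eq_zero] at hH
        exact hP0 hH
      refine hsing ![-α, 1] H (fun h => one_ne_zero (congrFun h 1)) ?_ ?_
      · have h5 := formPoly_natDegree_le (n := 5) v
        rw [← hP, ← natDegree_map φ, hH, ((monic_X_sub_C α).pow 2).natDegree_mul' hH0,
          (monic_X_sub_C α).natDegree_pow, natDegree_X_sub_C] at h5
        omega
      · rw [hH, formPoly_linear, C_neg, C_1, one_mul, add_comm, ← sub_eq_add_neg]

end Quintic

open scoped Classical in
/-- Inclusion–exclusion for the indicator function of the zero or singular quintic forms. -/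
theorem indicator_singular {k : Type*} [Field k] [Fintype k] [DecidableEq k]
    (hk : ringChar k ≠ 2) (v : Fin 6 → k) :
    (if v = 0 ∨ IsSingularQuintic v then 1 else 0 : ℤ) =
      (if SqDvd 3 ![1, 0] v then 1 else 0) + ∑ t : k, (if SqDvd 3 ![-t, 1] v then 1 else 0) -
      ∑ t : k, (if SqDvd 1 ![-t, 1, 0] v then 1 else 0) -
      ∑ q : k × k, (if SqDvd 1 ![q.1, q.2, 1] v then
        quadraticChar k (q.2 ^ 2 - 4 * q.1) else 0) := by
  rcases eq_or_ne v 0 with rfl | hv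
  · have h3 : ∀ f : Fin 2 → k, SqDvd 3 f (0 : Fin 6 → k) := sqDvd_zero (a := 1) (b := 3)
    have h1 : ∀ f : Fin 3 → k, SqDvd 1 f (0 : Fin 6 → k) := sqDvd_zero (a := 2) (b := 1)
    simp only [h3, h1, true_or, if_true, sum_quadraticChar_disc hk]
    ring
  simp only [sqDvd_infinity, sqDvd_linear, sqDvd_linear_infinity, sqDvd_quadratic, hv, false_or,
    isSingularQuintic_iff hv]
  have hP := formPoly_ne_zero (n := 5) hv
  by_cases hdeg : (formPoly (n := 5) v).natDegree ≤ 3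
  · have hq : ∀ q : k × k, ¬ (C q.1 + C q.2 * X + X ^ 2) ^ 2 ∣ formPoly (n := 5) v := by
      intro q hq
      have h := natDegree_le_of_dvd hq hP
      rw [natDegree_pow, (monic_quadratic q.1 q.2).2] at h
      omega
    simp only [hdeg, hq, true_or, if_true, if_false, and_true, Finset.sum_const_zero]
    ring
  · simp only [hdeg, false_or, and_false, if_false, Finset.sum_const_zero, ite_not, zero_add,
      sub_zero]
    exact indicator_not_squarefree hk hP (formPoly_natDegree_le (n := 5) v)

end Singular

section PlaneClasses

variable {k : Type*} [Field k]

/-- Normalized representatives of the classes of nonzero binary quadratic forms. -/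
def quadraticRep : (k × k) ⊕ k ⊕ Unit → Fin 3 → k
  | .inl q => ![q.1, q.2, 1]
  | .inr (.inl t) => ![-t, 1, 0]
  | .inr (.inr _) => ![1, 0, 0]

theorem quadraticRep_ne_zero (i : (k × k) ⊕ k ⊕ Unit) : quadraticRep i ≠ 0 := by
  rcases i with q | t | _
  · exact fun h => one_ne_zero (congrFun h 2)
  · exact fun h => one_ne_zero (congrFun h 1)
  · exact fun h => one_ne_zero (congrFun h 0)

theorem bijective_mk_quadraticRep : Function.Bijective fun i : (k × k) ⊕ k ⊕ Unit =>
    Projectivization.mk k (quadraticRep i) (quadraticRep_ne_zero i) := by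
  constructor
  · intro i j h
    obtain ⟨a, ha⟩ := (Projectivization.mk_eq_mk_iff' k _ _ _ _).1 h
    have h0 := congrFun ha 0
    have h1 := congrFun ha 1
    have h2 := congrFun ha 2
    rcases i with ⟨c, b⟩ | t | _ <;> rcases j with ⟨c', b'⟩ | t' | _ <;>
      simp [quadraticRep] at h0 h1 h2 ⊢ <;> simp_all
  · refine Projectivization.ind fun f hf => ?_
    simp only [Projectivization.mk_eq_mk_iff']
    by_cases h2 : f 2 = 0
    · by_cases h1 : f 1 = 0
      · have h0 : f 0 ≠ 0 := fun h0 => hf (by ext i; fin_cases i <;> assumption)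
        refine ⟨.inr (.inr ()), (f 0)⁻¹, ?_⟩
        ext i
        fin_cases i <;> simp [quadraticRep, h0, h1, h2]
      · refine ⟨.inr (.inl (-((f 1)⁻¹ * f 0))), (f 1)⁻¹, ?_⟩
        ext i
        fin_cases i <;> simp [quadraticRep, h1, h2]
    · refine ⟨.inl ((f 2)⁻¹ * f 0, (f 2)⁻¹ * f 1), (f 2)⁻¹, ?_⟩
      ext i
      fin_cases i <;> simp [quadraticRep, h2]

/-- Summation over the classes of nonzero binary quadratic forms. -/
theorem finsum_projectivization [Fintype k] {M : Type*} [AddCommMonoid M]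
    (G : (Fin 3 → k) → M) (hG : ∀ (a : kˣ) f, G (a • f) = G f) :
    ∑ᶠ x : Projectivization k (Fin 3 → k), G x.rep =
      ∑ q : k × k, G ![q.1, q.2, 1] + (∑ t : k, G ![-t, 1, 0] + G ![1, 0, 0]) := by
  have h : ∀ i : (k × k) ⊕ k ⊕ Unit, G (quadraticRep i) =
      G (Projectivization.mk k (quadraticRep i) (quadraticRep_ne_zero i)).rep := fun i => by
    obtain ⟨a, ha⟩ := Projectivization.exists_smul_eq_mk_rep k _ (quadraticRep_ne_zero i)
    rw [← ha, hG]
  rw [← finsum_eq_of_bijective _ bijective_mk_quadraticRep h, finsum_eq_sum_of_fintype,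
    Fintype.sum_sum_type, Fintype.sum_sum_type]
  simp [quadraticRep]

end PlaneClasses

section ExponentialSum

theorem formMul_add {k : Type*} [CommRing k] {a b : ℕ} (f : Fin (a + 1) → k)
    (g h : Fin (b + 1) → k) : formMul f (g + h) = formMul f g + formMul f h := by
  ext i
  simp only [formMul, Pi.add_apply, mul_add, ← Finset.sum_add_distrib]
  refine Finset.sum_congr rfl fun q _ => ?_
  split_ifs <;> simp

theorem pair_add {k : Type*} [CommRing k] {n : ℕ} (w u v : Fin (n + 1) → k) :
    pair w (u + v) = pair w u + pair w v := by
  simp [pair, mul_add, Finset.sum_add_distrib]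

theorem pair_smul {k : Type*} [CommRing k] {n : ℕ} (w v : Fin (n + 1) → k) (a : k) :
    pair w (a • v) = a * pair w v := by
  simp only [pair, Finset.mul_sum, Pi.smul_apply, smul_eq_mul]
  exact Finset.sum_congr rfl fun i _ => by ring

theorem formMul_smul_smul {k : Type*} [CommRing k] {a b : ℕ} (f : Fin (a + 1) → k)
    (h : Fin (b + 1) → k) (c : k) :
    formMul (formMul (c • f) (c • f)) h = (c * c) • formMul (formMul f f) h := by
  ext i
  simp only [formMul, Pi.smul_apply, smul_eq_mul, Finset.mul_sum, Finset.sum_mul, mul_ite, ite_mul,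
    mul_zero, zero_mul]
  refine Finset.sum_congr rfl fun q _ => ?_
  split_ifs with hq
  · refine Finset.sum_congr rfl fun r _ => ?_
    split_ifs <;> ring
  · rfl

variable {p : ℕ} [Fact p.Prime]

open scoped Classical in
/-- The character sum over the multiples of the square of a fixed form. -/
theorem sum_sqDvd_stdAddChar {a b : ℕ} {f : Fin (a + 1) → ZMod p} (hf : f ≠ 0)
    (w : Fin (a + a + b + 1) → ZMod p) :
    ∑ v, (if SqDvd b f v then ZMod.stdAddChar (pair w v) else 0 : ℂ) =
      if ∀ h : Fin (b + 1) → ZMod p, pair w (formMul (formMul f f) h) = 0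
      then (p : ℂ) ^ (b + 1) else 0 := by
  let L : (Fin (b + 1) → ZMod p) →+ ZMod p := AddMonoidHom.mk'
    (fun h => pair w (formMul (formMul f f) h)) fun g h => by rw [formMul_add, pair_add]
  have hinj : Function.Injective (formMul (formMul f f) : (Fin (b + 1) → ZMod p) → _) :=
    formMul_injective (formMul_ne_zero hf hf)
  have himage : univ.filter (SqDvd b f) =
      univ.image (formMul (formMul f f) : (Fin (b + 1) → ZMod p) → _) := by
    ext v
    simp [SqDvd]
  have hsum := AddChar.sum_eq_ite ((ZMod.stdAddChar (N := p)).compAddMonoidHom L)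
  rw [← Finset.sum_filter, himage, Finset.sum_image hinj.injOn]
  refine hsum.trans (if_congr ?_ (by simp) rfl)
  rw [AddChar.eq_zero_iff]
  refine forall_congr' fun h => ?_
  change ZMod.stdAddChar (L h) = 1 ↔ L h = 0
  rw [← AddChar.map_zero_eq_one (ZMod.stdAddChar (N := p)),
    ZMod.injective_stdAddChar.eq_iff]

theorem exp_val_eq_stdAddChar (x : ZMod p) :
    Complex.exp (2 * Real.pi * Complex.I * (x.val : ℂ) / (p : ℂ)) = ZMod.stdAddChar x := by
  have := ZMod.stdAddChar_coe (N := p) x.val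
  simpa using this.symm

end ExponentialSum

open scoped Classical in
/-- If `p` is an odd prime and no nonzero binary quadratic form over `𝔽_p` is apolar to
`w` (catalecticant rank 3), then `S(w) = -p²·∑ χ(Disc f)`, the sum being over classes
`[f] ∈ ℙ(V₂^*)` with `f²` apolar to `w`. -/
theorem stmt17 (p : ℕ) [Fact p.Prime] (hp : p ≠ 2) (w : Fin 6 → ZMod p)
    (h3 : ¬ ∃ q : Fin 3 → ZMod p, q ≠ 0 ∧
      ∀ h : Fin 4 → ZMod p, pair w (formMul q h) = 0) :
    expSum p w = -(p : ℂ) ^ 2 *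
      ∑ᶠ x : Projectivization (ZMod p) (Fin 3 → ZMod p),
        if ∃ (f : Fin 3 → ZMod p) (hf : f ≠ 0), Projectivization.mk (ZMod p) f hf = x ∧
            ∀ h : Fin 2 → ZMod p, pair w (formMul (formMul f f) h) = 0
        then (quadraticChar (ZMod p) (disc x.rep) : ℂ) else 0 := by
  have hk : ringChar (ZMod p) ≠ 2 := by rwa [ZMod.ringChar_zmod_n]
  let A : (Fin 3 → ZMod p) → Prop := fun f =>
    ∀ h : Fin 2 → ZMod p, pair w (formMul (formMul f f) h) = 0
  let G : (Fin 3 → ZMod p) → ℂ := fun f =>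
    if A f then (quadraticChar (ZMod p) (disc f) : ℂ) else 0
  have hA : ∀ (a : (ZMod p)ˣ) f, A (a • f) ↔ A f := fun a f => forall_congr' fun h => by
    have h1 := (congrArg (pair w) (formMul_smul_smul f h (a : ZMod p))).trans
      (pair_smul w (formMul (formMul f f) h) _)
    refine (Iff.of_eq (congrArg (· = 0) h1)).trans ?_
    simp
  have hG : ∀ (a : (ZMod p)ˣ) f, G (a • f) = G f := fun a f => by
    refine if_congr (hA a f) ?_ rfl
    have : disc (a • f) = (a : ZMod p) ^ 2 * disc f := by
      simp only [disc, Pi.smul_apply, Units.smul_def, smul_eq_mul]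
      ring
    rw [this, map_mul, quadraticChar_sq_one' a.ne_zero, one_mul]
  have hsummand : ∀ x : Projectivization (ZMod p) (Fin 3 → ZMod p),
      (if ∃ (f : Fin 3 → ZMod p) (hf : f ≠ 0), Projectivization.mk (ZMod p) f hf = x ∧
            ∀ h : Fin 2 → ZMod p, pair w (formMul (formMul f f) h) = 0
        then (quadraticChar (ZMod p) (disc x.rep) : ℂ) else 0) = G x.rep := by
    refine fun x => if_congr ⟨?_, fun h => ⟨x.rep, x.rep_nonzero, x.mk_rep, h⟩⟩ rfl rfl
    rintro ⟨f, hf, rfl, h⟩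
    obtain ⟨a, ha⟩ := Projectivization.exists_smul_eq_mk_rep (ZMod p) f hf
    rw [← ha]
    exact (hA a f).2 h
  have hlin : ∀ l : Fin 2 → ZMod p, l ≠ 0 →
      ∑ v : Fin 6 → ZMod p, (if SqDvd 3 l v then ZMod.stdAddChar (pair w v) else 0 : ℂ) = 0 :=
    fun l hl => (sum_sqDvd_stdAddChar (a := 1) (b := 3) hl w).trans
      (if_neg fun h => h3 ⟨formMul l l, formMul_ne_zero hl hl, h⟩)
  have hquad : ∀ f : Fin 3 → ZMod p, f ≠ 0 →
      ∑ v : Fin 6 → ZMod p, (if SqDvd 1 f v then ZMod.stdAddChar (pair w v) else 0 : ℂ) =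
        if A f then (p : ℂ) ^ 2 else 0 :=
    fun f hf => sum_sqDvd_stdAddChar (a := 2) (b := 1) hf w
  have hexp : expSum p w = ∑ v : Fin 6 → ZMod p, ZMod.stdAddChar (pair w v) *
      ((if v = 0 ∨ IsSingularQuintic v then 1 else 0 : ℤ) : ℂ) := by
    refine Finset.sum_congr rfl fun v _ => ?_
    rw [exp_val_eq_stdAddChar]
    split_ifs <;> simp
  have hlinear : ∀ t : ZMod p, ∑ v : Fin 6 → ZMod p,
      (if SqDvd 1 ![-t, 1, 0] v then ZMod.stdAddChar (pair w v) else 0 : ℂ) =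
        (p : ℂ) ^ 2 * G ![-t, 1, 0] := fun t => by
    rw [hquad ![-t, 1, 0] (quadraticRep_ne_zero (.inr (.inl t)))]
    have : disc ![-t, 1, 0] = 1 := by simp [disc]
    simp [G, this]
  have hquadratic : ∀ q : ZMod p × ZMod p, ∑ v : Fin 6 → ZMod p,
      (if SqDvd 1 ![q.1, q.2, 1] v then
        ZMod.stdAddChar (pair w v) * (quadraticChar (ZMod p) (q.2 ^ 2 - 4 * q.1) : ℂ)
        else 0 : ℂ) = (p : ℂ) ^ 2 * G ![q.1, q.2, 1] := fun q => by
    have hd : disc ![q.1, q.2, 1] = q.2 ^ 2 - 4 * q.1 := by simp [disc]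
    have h := congrArg (· * (quadraticChar (ZMod p) (q.2 ^ 2 - 4 * q.1) : ℂ))
      (hquad ![q.1, q.2, 1] (quadraticRep_ne_zero (.inl q)))
    simp only [Finset.sum_mul, ite_mul, zero_mul] at h
    refine h.trans ?_
    simp only [G, hd, mul_ite, mul_zero]
  have hinfinity : G ![1, 0, 0] = 0 := by
    have : disc ![(1 : ZMod p), 0, 0] = 0 := by simp [disc]
    simp [G, this]
  rw [finsum_congr hsummand, finsum_projectivization G hG, hexp, hinfinity]
  calc
    _ = ∑ v : Fin 6 → ZMod p, (if SqDvd 3 ![1, 0] v then ZMod.stdAddChar (pair w v) else 0 : ℂ) +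
        ∑ t : ZMod p, ∑ v : Fin 6 → ZMod p,
          (if SqDvd 3 ![-t, 1] v then ZMod.stdAddChar (pair w v) else 0 : ℂ) -
        ∑ t : ZMod p, ∑ v : Fin 6 → ZMod p,
          (if SqDvd 1 ![-t, 1, 0] v then ZMod.stdAddChar (pair w v) else 0 : ℂ) -
        ∑ q : ZMod p × ZMod p, ∑ v : Fin 6 → ZMod p,
          (if SqDvd 1 ![q.1, q.2, 1] v then
            ZMod.stdAddChar (pair w v) * (quadraticChar (ZMod p) (q.2 ^ 2 - 4 * q.1) : ℂ)
            else 0 : ℂ) := by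
      simp only [indicator_singular hk]
      push_cast
      simp only [mul_add, mul_sub, Finset.mul_sum, Finset.sum_add_distrib, Finset.sum_sub_distrib,
        mul_ite, mul_one, mul_zero]
      rw [Finset.sum_comm (s := univ (α := Fin 6 → ZMod p)) (t := univ (α := ZMod p)),
        Finset.sum_comm (s := univ (α := Fin 6 → ZMod p)) (t := univ (α := ZMod p)),
        Finset.sum_comm (s := univ (α := Fin 6 → ZMod p)) (t := univ (α := ZMod p × ZMod p))]
    _ = _ := by
      rw [hlin _ fun h => one_ne_zero (congrFun h 0),
        Finset.sum_eq_zero fun t _ => hlin ![-t, 1] fun h => one_ne_zero (congrFun h 1)]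
      simp only [hlinear, hquadratic, ← Finset.mul_sum]
      ring
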